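/- Let α, γ > 0 with α ≤ 1/(1 + γ), and suppose the oracle O satisfies: (i) O(b, A') depends only on the restriction of the bid vector b to A', and (ii) O(b, A') ≤ opt_b(A', B) for every bid vector b and every A' ⊆ A. Define the allocation rule f(b) = Greedy-OM(α, b) ∩ Greedy-TM(γ, b). Let S = f(c) for the true costs c, and for each winner i ∈ S let p_i = sup{ β > 0 : i ∈ f(β, c_{−i}) } be its threshold payment. Then Σ_{i∈S} p_i ≤ B; that is, the mechanism Deterministic-Large(α, γ) with threshold payments is budget feasible. -/

import Mathlib

open Classical

/-- Marginal value `m_i(S) = v(S ∪ {i}) - v(S)`. -/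
noncomputable def marg {ι : Type*} [DecidableEq ι] (v : Finset ι → ℝ) (S : Finset ι) (i : ι) : ℝ :=
  v (insert i S) - v S

/-- The next agent in the greedy order once the set `S` has been selected:
an agent of `Sᶜ` maximizing marginal value over bid, ties broken by the fixed linear order. -/
noncomputable def pick {ι : Type*} [Fintype ι] [LinearOrder ι] [Nonempty ι]
    (v : Finset ι → ℝ) (b : ι → ℝ) (S : Finset ι) : ι :=
  if h : Sᶜ.Nonempty then
    (Sᶜ.filter fun j => ∀ j' ∈ Sᶜ, marg v S j' / b j' ≤ marg v S j / b j).min'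
      (by
        obtain ⟨j, hj, hmax⟩ := Finset.exists_max_image Sᶜ (fun j => marg v S j / b j) h
        exact ⟨j, Finset.mem_filter.mpr ⟨hj, hmax⟩⟩)
  else Classical.arbitrary ι

/-- `greedySet v b t` is the set `S_t` of the first `t` agents in the greedy order
computed with respect to the bid vector `b`. -/
noncomputable def greedySet {ι : Type*} [Fintype ι] [LinearOrder ι] [Nonempty ι]
    (v : Finset ι → ℝ) (b : ι → ℝ) : ℕ → Finset ι
  | 0 => ∅
  | t + 1 => insert (pick v b (greedySet v b t)) (greedySet v b t)

/-- `agent v b k` is the `k`-th agent `a_k` in the greedy order (1-indexed). -/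
noncomputable def agent {ι : Type*} [Fintype ι] [LinearOrder ι] [Nonempty ι]
    (v : Finset ι → ℝ) (b : ι → ℝ) (k : ℕ) : ι :=
  pick v b (greedySet v b (k - 1))

/-- `optVal v b B A'` is the maximum of `v S` over `S ⊆ A'` with `∑_{i ∈ S} b i ≤ B`. -/
noncomputable def optVal {ι : Type*} (v : Finset ι → ℝ) (b : ι → ℝ) (B : ℝ)
    (A' : Finset ι) : ℝ :=
  sSup (v '' {S : Finset ι | S ⊆ A' ∧ ∑ i ∈ S, b i ≤ B})

/-- The greedy threshold mechanism `Greedy-TM(γ, b)`: it outputs `S_{k-1}` where `k` is the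
least index with `b_{a_k} · v(S_k) > γ · B · m_{a_k}(S_{k-1})`, and all of `A` if no such `k`
exists. -/
noncomputable def greedyTM {ι : Type*} [Fintype ι] [LinearOrder ι] [Nonempty ι]
    (v : Finset ι → ℝ) (B γ : ℝ) (b : ι → ℝ) : Finset ι :=
  if h : ∃ k, (1 ≤ k ∧ k ≤ Fintype.card ι) ∧
      b (agent v b k) * v (greedySet v b k) >
        γ * B * marg v (greedySet v b (k - 1)) (agent v b k)
  then greedySet v b (Nat.find h - 1)
  else Finset.univ

/-- The exponential-time greedy oracle mechanism `Greedy-EOM(α, b)`: it outputs `S_{k-1}` where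
`k` is the least index with `v(S_k) > α · opt_b(A, B)`, and all of `A` if no such `k` exists. -/
noncomputable def greedyEOM {ι : Type*} [Fintype ι] [LinearOrder ι] [Nonempty ι]
    (v : Finset ι → ℝ) (B α : ℝ) (b : ι → ℝ) : Finset ι :=
  if h : ∃ k, (1 ≤ k ∧ k ≤ Fintype.card ι) ∧
      v (greedySet v b k) > α * optVal v b B Finset.univ
  then greedySet v b (Nat.find h - 1)
  else Finset.univ

/-- The greedy oracle mechanism `Greedy-OM(α, b)` with oracle `O`: it outputs
`{ a_t : 1 ≤ t ≤ n, v(S_t) ≤ α · O(b, A \ {a_t}) }`. -/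
noncomputable def greedyOM {ι : Type*} [Fintype ι] [LinearOrder ι] [Nonempty ι]
    (v : Finset ι → ℝ) (O : (ι → ℝ) → Finset ι → ℝ) (α : ℝ) (b : ι → ℝ) : Finset ι :=
  ((Finset.Icc 1 (Fintype.card ι)).filter
      (fun t => v (greedySet v b t) ≤ α * O b (Finset.univ.erase (agent v b t)))).image
    (fun t => agent v b t)

/-- An allocation rule `f`, mapping bid vectors with positive entries to subsets of the agents,
is monotone if a winner remains a winner after lowering his bid. -/
def MonotoneAlloc {ι : Type*} [DecidableEq ι] (f : (ι → ℝ) → Finset ι) : Prop :=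
  ∀ b : ι → ℝ, (∀ j, 0 < b j) → ∀ i ∈ f b, ∀ β : ℝ, 0 < β → β ≤ b i →
    i ∈ f (Function.update b i β)

/-!
Let `P i` be the set of agents preceding `i` in the greedy order for the costs `c`. If `i` raises
its bid to `β`, this set can only grow, to `Q i` say. If `i` still wins at `β`, the threshold test
gives `β v(Q i ∪ {i}) ≤ γ B m_i(Q i)`, and since agents outside `Q i` then have density at most
`m_i(Q i) / β`, each set `T` within budget satisfies `β v(T) ≤ (1 + γ) B m_i(Q i)`. By
submodularity `m_i(Q i) ≤ m_i(P i)`, so the payment of `i` is at most `(1 + γ) B m_i(P i) / v(T)`.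
The marginals `m_i(P i)` of the winners telescope to at most `v(P l ∪ {l})`, where `l` is the last
winner, and the oracle test for `l` bounds this by `v(T) / (1 + γ)` for an optimal `T`.
-/

section Marginals

/-- Submodularity of a set function in its lattice form. -/
def IsSubmodular {ι : Type*} [DecidableEq ι] (v : Finset ι → ℝ) : Prop :=
  ∀ S T : Finset ι, v (S ∪ T) + v (S ∩ T) ≤ v S + v T

variable {ι : Type*} [DecidableEq ι] {v : Finset ι → ℝ}

theorem marg_of_mem {S : Finset ι} {i : ι} (hi : i ∈ S) : marg v S i = 0 := by
  rw [marg, Finset.insert_eq_of_mem hi, sub_self]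

theorem marg_nonneg (hmono : Monotone v) (S : Finset ι) (i : ι) : 0 ≤ marg v S i :=
  sub_nonneg.2 (hmono (Finset.subset_insert i S))

theorem marg_anti (hmono : Monotone v) (hsub : IsSubmodular v) {S T : Finset ι} (hST : S ⊆ T)
    (i : ι) : marg v T i ≤ marg v S i := by
  have hunion : insert i S ∪ T = insert i T := by
    rw [Finset.insert_union, Finset.union_eq_right.2 hST]
  have hinter : v S ≤ v (insert i S ∩ T) :=
    hmono (Finset.subset_inter (Finset.subset_insert i S) hST)
  have hlattice := hsub (insert i S) T
  rw [hunion] at hlattice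
  unfold marg
  linarith

theorem value_union_le_add_sum_marg (hmono : Monotone v) (hsub : IsSubmodular v)
    (S T : Finset ι) : v (S ∪ T) ≤ v S + ∑ j ∈ T, marg v S j := by
  induction T using Finset.induction_on with
  | empty => simp
  | insert a T ha ih =>
    have hstep : v (insert a (S ∪ T)) - v (S ∪ T) ≤ marg v S a :=
      marg_anti hmono hsub Finset.subset_union_left a
    rw [Finset.sum_insert ha, Finset.union_insert]
    linarith

end Marginals

theorem exists_value_eq_optVal {ι : Type*} [Finite ι] (v : Finset ι → ℝ) (b : ι → ℝ) {B : ℝ}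
    (hB : 0 ≤ B) (A' : Finset ι) :
    ∃ T ⊆ A', ∑ i ∈ T, b i ≤ B ∧ v T = optVal v b B A' := by
  have hne : (v '' {S : Finset ι | S ⊆ A' ∧ ∑ i ∈ S, b i ≤ B}).Nonempty :=
    ⟨v ∅, ∅, ⟨Finset.empty_subset A', by simpa using hB⟩, rfl⟩
  obtain ⟨T, ⟨hTA, hTB⟩, hT⟩ := hne.csSup_mem (Set.toFinite _)
  exact ⟨T, hTA, hTB, hT⟩

section ThresholdPayment

/-- The threshold payment of `i` under the allocation rule `f` at the costs `c`: the supremum of the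
bids at which `i` wins. It is `0`, not `∞`, if `i` wins at arbitrarily high bids. -/
noncomputable def thresholdPayment {ι : Type*} [DecidableEq ι] (f : (ι → ℝ) → Finset ι)
    (c : ι → ℝ) (i : ι) : ℝ :=
  sSup {β : ℝ | 0 < β ∧ i ∈ f (Function.update c i β)}

variable {ι : Type*} [DecidableEq ι] {f : (ι → ℝ) → Finset ι} {c : ι → ℝ} {i : ι}

theorem thresholdPayment_le {M : ℝ} (hci : 0 < c i) (hi : i ∈ f c)
    (hM : ∀ β, c i ≤ β → i ∈ f (Function.update c i β) → β ≤ M) : thresholdPayment f c i ≤ M := by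
  have hself : i ∈ f (Function.update c i (c i)) := by rwa [Function.update_eq_self]
  refine csSup_le ⟨c i, hci, hself⟩ ?_
  rintro β ⟨-, hβ⟩
  rcases le_total (c i) β with hle | hle
  · exact hM β hle hβ
  · exact hle.trans (hM (c i) le_rfl hself)

theorem thresholdPayment_eq_zero_of_forall_mem (h : ∀ β, 0 < β → i ∈ f (Function.update c i β)) :
    thresholdPayment f c i = 0 := by
  have hsubset : Set.Ioi 0 ⊆ {β : ℝ | 0 < β ∧ i ∈ f (Function.update c i β)} :=
    fun β hβ => ⟨hβ, h β hβ⟩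
  exact Real.sSup_of_not_bddAbove fun hbdd => not_bddAbove_Ioi 0 (hbdd.mono hsubset)

end ThresholdPayment

section GreedyOrder

variable {ι : Type*} [Fintype ι] [LinearOrder ι] [Nonempty ι] {v : Finset ι → ℝ} {b c : ι → ℝ}
  {S : Finset ι} {i j : ι} {t : ℕ}

theorem pick_mem_filter (v : Finset ι → ℝ) (b : ι → ℝ) (hS : Sᶜ.Nonempty) :
    pick v b S ∈ Sᶜ.filter fun j => ∀ j' ∈ Sᶜ, marg v S j' / b j' ≤ marg v S j / b j := by
  rw [pick, dif_pos hS]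
  exact Finset.min'_mem _ _

theorem pick_notMem (v : Finset ι → ℝ) (b : ι → ℝ) (hS : Sᶜ.Nonempty) : pick v b S ∉ S :=
  Finset.mem_compl.1 (Finset.mem_filter.1 (pick_mem_filter v b hS)).1

theorem marg_div_le_marg_pick_div (hj : j ∉ S) :
    marg v S j / b j ≤ marg v S (pick v b S) / b (pick v b S) :=
  have hj' : j ∈ Sᶜ := Finset.mem_compl.2 hj
  (Finset.mem_filter.1 (pick_mem_filter v b ⟨j, hj'⟩)).2 j hj'

theorem pick_le_of_forall_le (hj : j ∉ S)
    (hmax : ∀ j' ∉ S, marg v S j' / b j' ≤ marg v S j / b j) : pick v b S ≤ j := by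
  have hj' : j ∈ Sᶜ := Finset.mem_compl.2 hj
  rw [pick, dif_pos ⟨j, hj'⟩]
  exact Finset.min'_le _ _
    (Finset.mem_filter.2 ⟨hj', fun j' h => hmax j' (Finset.mem_compl.1 h)⟩)

theorem pick_update_of_le (hmono : Monotone v) (hci : 0 < c i) {β : ℝ} (hβ : c i ≤ β)
    (hi : i ∉ S) (hpick : pick v c S ≠ i) :
    pick v (Function.update c i β) S = pick v c S := by
  have hS : Sᶜ.Nonempty := ⟨i, Finset.mem_compl.2 hi⟩
  have hdensity (j : ι) : marg v S j / Function.update c i β j ≤ marg v S j / c j := by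
    obtain rfl | hj := eq_or_ne j i
    · rw [Function.update_self]
      exact div_le_div_of_nonneg_left (marg_nonneg hmono S j) hci hβ
    · rw [Function.update_of_ne hj]
  apply le_antisymm
  · refine pick_le_of_forall_le (pick_notMem v c hS) fun j hj => ?_
    rw [Function.update_of_ne hpick]
    exact (hdensity j).trans (marg_div_le_marg_pick_div hj)
  · refine pick_le_of_forall_le (pick_notMem v _ hS) fun j hj => ?_
    have hle := marg_div_le_marg_pick_div (v := v) (b := Function.update c i β) (pick_notMem v c hS)
    rw [Function.update_of_ne hpick] at hle
    exact (marg_div_le_marg_pick_div hj).trans (hle.trans (hdensity _))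

theorem greedySet_monotone (v : Finset ι → ℝ) (b : ι → ℝ) : Monotone (greedySet v b) :=
  monotone_nat_of_le_succ fun _ => Finset.subset_insert _ _

theorem card_greedySet_le (v : Finset ι → ℝ) (b : ι → ℝ) (t : ℕ) :
    (greedySet v b t).card ≤ t := by
  induction t with
  | zero => rfl
  | succ t ih => exact (Finset.card_insert_le _ _).trans (Nat.succ_le_succ ih)

theorem pick_greedySet_notMem (v : Finset ι → ℝ) (b : ι → ℝ) (ht : t < Fintype.card ι) :
    pick v b (greedySet v b t) ∉ greedySet v b t := by
  refine pick_notMem v b ?_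
  rw [← Finset.card_pos, Finset.card_compl]
  exact Nat.sub_pos_of_lt ((card_greedySet_le v b t).trans_lt ht)

theorem card_greedySet (v : Finset ι → ℝ) (b : ι → ℝ) (ht : t ≤ Fintype.card ι) :
    (greedySet v b t).card = t := by
  induction t with
  | zero => rfl
  | succ t ih =>
    rw [greedySet, Finset.card_insert_of_notMem (pick_greedySet_notMem v b ht),
      ih (Nat.le_of_succ_le ht)]

theorem greedySet_card_eq_univ (v : Finset ι → ℝ) (b : ι → ℝ) :
    greedySet v b (Fintype.card ι) = Finset.univ :=
  (Finset.card_eq_iff_eq_univ _).1 (card_greedySet v b le_rfl)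

theorem exists_mem_greedySet_succ (v : Finset ι → ℝ) (b : ι → ℝ) (i : ι) :
    ∃ t, i ∈ greedySet v b (t + 1) :=
  ⟨Fintype.card ι, greedySet_monotone v b (Nat.le_succ _)
    (greedySet_card_eq_univ v b ▸ Finset.mem_univ i)⟩

/-- The number of agents preceding `i` in the greedy order, so that `i` is the agent `a_t` with
`t = greedyRank v b i + 1`. -/
noncomputable def greedyRank (v : Finset ι → ℝ) (b : ι → ℝ) (i : ι) : ℕ :=
  Nat.find (exists_mem_greedySet_succ v b i)

/-- The set of agents preceding `i` in the greedy order: `S_{t-1}` for `i = a_t`. -/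
noncomputable def greedyPrefix (v : Finset ι → ℝ) (b : ι → ℝ) (i : ι) : Finset ι :=
  greedySet v b (greedyRank v b i)

theorem mem_greedySet_iff (v : Finset ι → ℝ) (b : ι → ℝ) (i : ι) (t : ℕ) :
    i ∈ greedySet v b t ↔ greedyRank v b i < t := by
  constructor
  · intro hi
    cases t with
    | zero => exact absurd hi (Finset.notMem_empty i)
    | succ t => exact Nat.lt_succ_of_le (Nat.find_min' _ hi)
  · exact fun ht => greedySet_monotone v b ht (Nat.find_spec (exists_mem_greedySet_succ v b i))

theorem greedyRank_lt_card (v : Finset ι → ℝ) (b : ι → ℝ) (i : ι) :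
    greedyRank v b i < Fintype.card ι := by
  rw [← mem_greedySet_iff, greedySet_card_eq_univ]
  exact Finset.mem_univ i

theorem notMem_greedyPrefix (v : Finset ι → ℝ) (b : ι → ℝ) (i : ι) : i ∉ greedyPrefix v b i := by
  rw [greedyPrefix, mem_greedySet_iff]
  exact lt_irrefl _

theorem pick_greedyPrefix (v : Finset ι → ℝ) (b : ι → ℝ) (i : ι) :
    pick v b (greedyPrefix v b i) = i := by
  have hi : i ∈ greedySet v b (greedyRank v b i + 1) :=
    (mem_greedySet_iff v b i _).2 (Nat.lt_succ_self _)
  exact ((Finset.mem_insert.1 hi).resolve_right (notMem_greedyPrefix v b i)).symm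

theorem agent_greedyRank_succ (v : Finset ι → ℝ) (b : ι → ℝ) (i : ι) :
    agent v b (greedyRank v b i + 1) = i :=
  pick_greedyPrefix v b i

theorem greedySet_greedyRank_succ (v : Finset ι → ℝ) (b : ι → ℝ) (i : ι) :
    greedySet v b (greedyRank v b i + 1) = insert i (greedyPrefix v b i) := by
  rw [greedySet, ← greedyPrefix, pick_greedyPrefix]

theorem greedyRank_pick_greedySet (v : Finset ι → ℝ) (b : ι → ℝ) (ht : t < Fintype.card ι) :
    greedyRank v b (pick v b (greedySet v b t)) = t := by
  have hge := pick_greedySet_notMem v b ht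
  have hlt : pick v b (greedySet v b t) ∈ greedySet v b (t + 1) := Finset.mem_insert_self _ _
  rw [mem_greedySet_iff] at hge hlt
  omega

theorem greedySet_update_eq (hmono : Monotone v) (hci : 0 < c i) {β : ℝ} (hβ : c i ≤ β)
    (ht : t ≤ greedyRank v c i) :
    greedySet v (Function.update c i β) t = greedySet v c t := by
  induction t with
  | zero => rfl
  | succ t ih =>
    have hi : i ∉ greedySet v c (t + 1) := by rwa [mem_greedySet_iff, not_lt]
    rw [greedySet, Finset.mem_insert, not_or] at hi
    rw [greedySet, greedySet, ih (Nat.le_of_succ_le ht),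
      pick_update_of_le hmono hci hβ hi.2 (Ne.symm hi.1)]

theorem greedyPrefix_subset_greedyPrefix_update (hmono : Monotone v) (hci : 0 < c i) {β : ℝ}
    (hβ : c i ≤ β) : greedyPrefix v c i ⊆ greedyPrefix v (Function.update c i β) i := by
  have heq := greedySet_update_eq hmono hci hβ le_rfl
  have hrank : greedyRank v c i ≤ greedyRank v (Function.update c i β) i := by
    rw [← not_lt, ← mem_greedySet_iff, heq]
    exact notMem_greedyPrefix v c i
  rw [greedyPrefix, ← heq]
  exact greedySet_monotone v _ hrank

theorem sum_marg_greedyPrefix_greedySet (v : Finset ι → ℝ) (b : ι → ℝ)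
    (ht : t ≤ Fintype.card ι) :
    ∑ i ∈ greedySet v b t, marg v (greedyPrefix v b i) i = v (greedySet v b t) - v ∅ := by
  induction t with
  | zero => simp [greedySet]
  | succ t ih =>
    rw [greedySet, Finset.sum_insert (pick_greedySet_notMem v b ht), ih (Nat.le_of_succ_le ht),
      greedyPrefix, greedyRank_pick_greedySet v b ht, marg]
    ring

theorem sum_marg_greedyPrefix_le (hmono : Monotone v) (b : ι → ℝ) {W : Finset ι} {l : ι}
    (hl : ∀ i ∈ W, greedyRank v b i ≤ greedyRank v b l) :
    ∑ i ∈ W, marg v (greedyPrefix v b i) i ≤ v (insert l (greedyPrefix v b l)) - v ∅ := by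
  have hW : W ⊆ greedySet v b (greedyRank v b l + 1) := fun i hi =>
    (mem_greedySet_iff v b i _).2 (Nat.lt_succ_of_le (hl i hi))
  rw [← greedySet_greedyRank_succ,
    ← sum_marg_greedyPrefix_greedySet v b (Nat.succ_le_of_lt (greedyRank_lt_card v b l))]
  exact Finset.sum_le_sum_of_subset_of_nonneg hW fun i _ _ => marg_nonneg hmono _ i

theorem bid_mul_marg_greedyPrefix_le (hmono : Monotone v) (hb : ∀ j, 0 < b j) (i j : ι) :
    b i * marg v (greedyPrefix v b i) j ≤ b j * marg v (greedyPrefix v b i) i := by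
  by_cases hj : j ∈ greedyPrefix v b i
  · rw [marg_of_mem hj, mul_zero]
    exact mul_nonneg (hb j).le (marg_nonneg hmono _ i)
  · have hdensity := marg_div_le_marg_pick_div (v := v) (b := b) hj
    rw [pick_greedyPrefix, div_le_div_iff₀ (hb j) (hb i)] at hdensity
    linarith

theorem bid_mul_value_le (hmono : Monotone v) (hsub : IsSubmodular v) (hb : ∀ j, 0 < b j) (i : ι)
    (T : Finset ι) :
    b i * v T ≤ b i * v (insert i (greedyPrefix v b i)) +
      (∑ j ∈ T.erase i, b j) * marg v (greedyPrefix v b i) i := by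
  set P := greedyPrefix v b i
  have hmarg (j : ι) : b i * marg v (insert i P) j ≤ b j * marg v P i :=
    (mul_le_mul_of_nonneg_left (marg_anti hmono hsub (Finset.subset_insert i P) j) (hb i).le).trans
      (bid_mul_marg_greedyPrefix_le hmono hb i j)
  have hT : T ⊆ insert i P ∪ T.erase i := by
    intro j hj
    obtain rfl | hji := eq_or_ne j i <;> simp [*]
  have hvT : v T ≤ v (insert i P) + ∑ j ∈ T.erase i, marg v (insert i P) j :=
    (hmono hT).trans (value_union_le_add_sum_marg hmono hsub _ _)
  calc b i * v T
      ≤ b i * (v (insert i P) + ∑ j ∈ T.erase i, marg v (insert i P) j) :=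
        mul_le_mul_of_nonneg_left hvT (hb i).le
    _ = b i * v (insert i P) + ∑ j ∈ T.erase i, b i * marg v (insert i P) j := by
        rw [mul_add, Finset.mul_sum]
    _ ≤ b i * v (insert i P) + ∑ j ∈ T.erase i, b j * marg v P i :=
        add_le_add_right (Finset.sum_le_sum fun j _ => hmarg j) _
    _ = b i * v (insert i P) + (∑ j ∈ T.erase i, b j) * marg v P i := by rw [Finset.sum_mul]

theorem value_insert_greedyPrefix_pos (hmono : Monotone v) (hsub : IsSubmodular v)
    (hv0 : 0 ≤ v ∅) (hb : ∀ j, 0 < b j) {T : Finset ι} (hT : 0 < v T) (i : ι) :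
    0 < v (insert i (greedyPrefix v b i)) := by
  by_contra! hle
  have hmarg : marg v (greedyPrefix v b i) i ≤ 0 :=
    sub_nonpos.2 (hle.trans (hv0.trans (hmono (Finset.empty_subset _))))
  have hsum : 0 ≤ ∑ j ∈ T.erase i, b j := Finset.sum_nonneg fun j _ => (hb j).le
  have hbound := bid_mul_value_le hmono hsub hb i T
  linarith [mul_pos (hb i) hT, mul_nonpos_of_nonneg_of_nonpos (hb i).le hle,
    mul_nonpos_of_nonneg_of_nonpos hsum hmarg]

end GreedyOrder

section Mechanisms

variable {ι : Type*} [Fintype ι] [LinearOrder ι] [Nonempty ι] {v : Finset ι → ℝ} {b c : ι → ℝ}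
  {B α γ : ℝ} {O : (ι → ℝ) → Finset ι → ℝ} {i : ι}

theorem mem_greedyOM_iff :
    i ∈ greedyOM v O α b ↔
      v (insert i (greedyPrefix v b i)) ≤ α * O b (Finset.univ.erase i) := by
  simp only [greedyOM, Finset.mem_image, Finset.mem_filter, Finset.mem_Icc]
  constructor
  · rintro ⟨t, ⟨⟨ht1, ht⟩, hle⟩, rfl⟩
    obtain ⟨s, rfl⟩ := Nat.exists_eq_add_of_le' ht1
    have hrank : greedyRank v b (agent v b (s + 1)) = s := greedyRank_pick_greedySet v b ht
    rwa [← greedySet_greedyRank_succ, hrank]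
  · intro hle
    refine ⟨greedyRank v b i + 1, ⟨⟨Nat.le_add_left _ _, greedyRank_lt_card v b i⟩, ?_⟩,
      agent_greedyRank_succ v b i⟩
    rwa [agent_greedyRank_succ, greedySet_greedyRank_succ]

theorem bid_mul_value_le_of_mem_greedyTM (hi : i ∈ greedyTM v B γ b) :
    b i * v (insert i (greedyPrefix v b i)) ≤ γ * B * marg v (greedyPrefix v b i) i := by
  by_contra! hfail
  have hindex : (1 ≤ greedyRank v b i + 1 ∧ greedyRank v b i + 1 ≤ Fintype.card ι) ∧
      b (agent v b (greedyRank v b i + 1)) * v (greedySet v b (greedyRank v b i + 1)) >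
        γ * B * marg v (greedySet v b (greedyRank v b i + 1 - 1))
          (agent v b (greedyRank v b i + 1)) := by
    refine ⟨⟨Nat.le_add_left _ _, greedyRank_lt_card v b i⟩, ?_⟩
    rwa [agent_greedyRank_succ, greedySet_greedyRank_succ]
  unfold greedyTM at hi
  split_ifs at hi with hexists
  · have hfind := Nat.find_min' hexists hindex
    rw [mem_greedySet_iff] at hi
    omega
  · exact hexists ⟨_, hindex⟩

theorem bid_mul_value_le_marg_of_mem_greedyTM (hmono : Monotone v) (hsub : IsSubmodular v)
    (hb : ∀ j, 0 < b j) (hi : i ∈ greedyTM v B γ b) {T : Finset ι}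
    (hT : ∑ j ∈ T.erase i, b j ≤ B) :
    b i * v T ≤ (1 + γ) * B * marg v (greedyPrefix v b i) i := by
  have hbudget := mul_le_mul_of_nonneg_right hT (marg_nonneg hmono (greedyPrefix v b i) i)
  linarith [bid_mul_value_le hmono hsub hb i T, bid_mul_value_le_of_mem_greedyTM hi]

theorem raised_bid_mul_value_le (hmono : Monotone v) (hsub : IsSubmodular v) (hB : 0 ≤ B)
    (hγ : 0 ≤ 1 + γ) (hc : ∀ j, 0 < c j) {β : ℝ} (hβ : c i ≤ β)
    (hi : i ∈ greedyTM v B γ (Function.update c i β)) {T : Finset ι} (hT : ∑ j ∈ T, c j ≤ B) :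
    β * v T ≤ (1 + γ) * B * marg v (greedyPrefix v c i) i := by
  set b := Function.update c i β
  have hbi : b i = β := Function.update_self i β c
  have hb : ∀ j, 0 < b j :=
    (Function.forall_update_iff c (p := fun _ x => 0 < x)).2 ⟨(hc i).trans_le hβ, fun j _ => hc j⟩
  have hbudget : ∑ j ∈ T.erase i, b j ≤ B := by
    calc ∑ j ∈ T.erase i, b j
        = ∑ j ∈ T.erase i, c j :=
          Finset.sum_congr rfl fun j hj => Function.update_of_ne (Finset.ne_of_mem_erase hj) _ _
      _ ≤ ∑ j ∈ T, c j :=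
          Finset.sum_le_sum_of_subset_of_nonneg (Finset.erase_subset i T) fun j _ _ => (hc j).le
      _ ≤ B := hT
  calc β * v T
      ≤ (1 + γ) * B * marg v (greedyPrefix v b i) i := by
        simpa only [hbi] using bid_mul_value_le_marg_of_mem_greedyTM hmono hsub hb hi hbudget
    _ ≤ (1 + γ) * B * marg v (greedyPrefix v c i) i :=
        mul_le_mul_of_nonneg_left
          (marg_anti hmono hsub (greedyPrefix_subset_greedyPrefix_update hmono (hc i) hβ) i)
          (mul_nonneg hγ hB)

/-- The allocation rule `f(b) = Greedy-OM(α, b) ∩ Greedy-TM(γ, b)` of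
`Deterministic-Large(α, γ)`. -/
noncomputable def deterministicLarge (v : Finset ι → ℝ) (O : (ι → ℝ) → Finset ι → ℝ) (B α γ : ℝ)
    (b : ι → ℝ) : Finset ι :=
  greedyOM v O α b ∩ greedyTM v B γ b

theorem thresholdPayment_deterministicLarge_le (hmono : Monotone v) (hsub : IsSubmodular v)
    (hB : 0 ≤ B) (hγ : 0 ≤ 1 + γ) (hc : ∀ j, 0 < c j) (hi : i ∈ deterministicLarge v O B α γ c)
    {T : Finset ι} (hT : ∑ j ∈ T, c j ≤ B) (hvT : 0 < v T) :
    thresholdPayment (deterministicLarge v O B α γ) c i ≤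
      (1 + γ) * B / v T * marg v (greedyPrefix v c i) i := by
  refine thresholdPayment_le (hc i) hi fun β hβ hwin => ?_
  rw [div_mul_eq_mul_div, le_div_iff₀ hvT]
  exact raised_bid_mul_value_le hmono hsub hB hγ hc hβ (Finset.mem_inter.1 hwin).2 hT

theorem exists_value_le_of_mem_greedyOM (hB : 0 ≤ B) (hα : 0 ≤ α)
    (hO : O c (Finset.univ.erase i) ≤ optVal v c B (Finset.univ.erase i))
    (hi : i ∈ greedyOM v O α c) :
    ∃ T, ∑ j ∈ T, c j ≤ B ∧ v (insert i (greedyPrefix v c i)) ≤ α * v T := by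
  obtain ⟨T, -, hTB, hT⟩ := exists_value_eq_optVal v c hB (Finset.univ.erase i)
  refine ⟨T, hTB, (mem_greedyOM_iff.1 hi).trans ?_⟩
  rw [hT]
  exact mul_le_mul_of_nonneg_left hO hα

theorem sum_thresholdPayment_le_of_value_pos (hmono : Monotone v) (hsub : IsSubmodular v)
    (hv0 : 0 ≤ v ∅) (hv : 0 < v Finset.univ) (hB : 0 ≤ B) (hc : ∀ j, 0 < c j) (hα : 0 ≤ α)
    (hγ : 0 < 1 + γ) (hαγ : α ≤ 1 / (1 + γ))
    (hO : ∀ A', O c A' ≤ optVal v c B A') :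
    ∑ i ∈ deterministicLarge v O B α γ c,
      thresholdPayment (deterministicLarge v O B α γ) c i ≤ B := by
  set W := deterministicLarge v O B α γ c
  obtain hempty | hne := W.eq_empty_or_nonempty
  · rwa [hempty, Finset.sum_empty]
  obtain ⟨l, hl, hlast⟩ := W.exists_max_image (greedyRank v c) hne
  obtain ⟨T, hTB, hlT⟩ :=
    exists_value_le_of_mem_greedyOM hB hα (hO _) (Finset.mem_inter.1 hl).1
  have hlpos := value_insert_greedyPrefix_pos hmono hsub hv0 hc hv l
  have hvT : 0 < v T := pos_of_mul_pos_right (hlpos.trans_le hlT) hα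
  calc ∑ i ∈ W, thresholdPayment (deterministicLarge v O B α γ) c i
      ≤ ∑ i ∈ W, (1 + γ) * B / v T * marg v (greedyPrefix v c i) i :=
        Finset.sum_le_sum fun i hi =>
          thresholdPayment_deterministicLarge_le hmono hsub hB hγ.le hc hi hTB hvT
    _ = (1 + γ) * B / v T * ∑ i ∈ W, marg v (greedyPrefix v c i) i := by rw [Finset.mul_sum]
    _ ≤ (1 + γ) * B / v T * (1 / (1 + γ) * v T) := by
        gcongr
        linarith [sum_marg_greedyPrefix_le hmono c hlast, mul_le_mul_of_nonneg_right hαγ hvT.le]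
    _ = B := by field_simp

theorem mem_deterministicLarge_update_of_value_eq_zero (hv : ∀ S, v S = 0)
    (hO : ∀ b b' : ι → ℝ, ∀ A', (∀ j ∈ A', b j = b' j) → O b A' = O b' A')
    (hi : i ∈ deterministicLarge v O B α γ c) (β : ℝ) :
    i ∈ deterministicLarge v O B α γ (Function.update c i β) := by
  have hOM := mem_greedyOM_iff.1 (Finset.mem_inter.1 hi).1
  refine Finset.mem_inter.2 ⟨mem_greedyOM_iff.2 ?_, ?_⟩
  · rw [hv] at hOM ⊢
    rwa [hO _ c _ fun j hj => Function.update_of_ne (Finset.ne_of_mem_erase hj) β c]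
  · rw [greedyTM, dif_neg (by simp [marg, hv])]
    exact Finset.mem_univ i

theorem deterministicLarge_budget_feasible_general (hmono : Monotone v) (hsub : IsSubmodular v)
    (hv0 : v ∅ = 0) (hB : 0 ≤ B) (hc : ∀ j, 0 < c j) (hα : 0 ≤ α) (hγ : 0 < 1 + γ)
    (hαγ : α ≤ 1 / (1 + γ))
    (hOlocal : ∀ b b' : ι → ℝ, ∀ A', (∀ j ∈ A', b j = b' j) → O b A' = O b' A')
    (hOopt : ∀ A', O c A' ≤ optVal v c B A') :
    ∑ i ∈ deterministicLarge v O B α γ c,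
      thresholdPayment (deterministicLarge v O B α γ) c i ≤ B := by
  have hnonneg (S : Finset ι) : 0 ≤ v S := hv0 ▸ hmono (Finset.empty_subset S)
  obtain hzero | hpos := (hnonneg Finset.univ).eq_or_lt
  · -- Here every winner wins at every bid, so all payments take the junk value `0`.
    have hv (S : Finset ι) : v S = 0 :=
      le_antisymm (hzero ▸ hmono (Finset.subset_univ S)) (hnonneg S)
    rwa [Finset.sum_eq_zero fun i hi => thresholdPayment_eq_zero_of_forall_mem fun β _ =>
      mem_deterministicLarge_update_of_value_eq_zero hv hOlocal hi β]
  · exact sum_thresholdPayment_le_of_value_pos hmono hsub hv0.ge hpos hB hc hα hγ hαγ hOopt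

end Mechanisms

/-- `Deterministic-Large(α, γ)` with threshold payments is budget feasible
whenever `α ≤ 1/(1+γ)` (Lemma 5.3). -/
theorem deterministicLarge_budget_feasible {ι : Type*} [Fintype ι] [LinearOrder ι] [Nonempty ι]
    (v : Finset ι → ℝ) (hv0 : v (∅ : Finset ι) = 0)
    (hvmono : ∀ S T : Finset ι, S ⊆ T → v S ≤ v T)
    (hvsub : ∀ S T : Finset ι, v (S ∪ T) + v (S ∩ T) ≤ v S + v T)
    (B : ℝ) (hB : 0 < B)
    (c : ι → ℝ) (hc : ∀ i, 0 < c i) (hcB : ∀ i, c i ≤ B)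
    (α γ : ℝ) (hα0 : 0 < α) (hγ0 : 0 < γ) (hαγ : α ≤ 1 / (1 + γ))
    (O : (ι → ℝ) → Finset ι → ℝ)
    (hO1 : ∀ (b b' : ι → ℝ) (A' : Finset ι), (∀ j ∈ A', b j = b' j) → O b A' = O b' A')
    (hO2 : ∀ (b : ι → ℝ) (A' : Finset ι), O b A' ≤ optVal v b B A') :
    ∑ i ∈ greedyOM v O α c ∩ greedyTM v B γ c,
      sSup {β : ℝ | 0 < β ∧
        i ∈ greedyOM v O α (Function.update c i β) ∩
              greedyTM v B γ (Function.update c i β)} ≤ B :=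
  deterministicLarge_budget_feasible_general hvmono hvsub hv0 hB.le hc hα0.le (by linarith)
    hαγ hO1 (hO2 c)
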